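/- Let C = ⟨∏_j M_j^{k_j}(x)⟩ be a cyclic code of length n over R = F_q + uF_q, where x^n − (1+u) = ∏_j M_j(x) is a factorization into pairwise coprime monic basic irreducible polynomials and 0 ≤ k_j ≤ 2. Then |C| = q^{Σ_j (2 − k_j)·deg M_j} and |C^{⊥_H}| = q^{Σ_j k_j·deg M_j}; in particular |C|·|C^{⊥_H}| = q^{2n}. -/

import Mathlib

/-!
Put `A = R[x]/(x^n - 1)`. In `A` the product of all the `Mⱼ` equals `-u`, hence `∏ Mⱼ² = 0`, and
`u` is a multiple of every `Mⱼ`. So `A / (Mⱼ)` is represented by polynomials over `F_q` of degree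
less than `deg Mⱼ` and has at most `q^(deg Mⱼ)` elements (`cosetCover_of_dvd_eps`). The index of a
principal ideal is submultiplicative in the generator (`CosetCover.mul`). With
`P = ∏ Mⱼ^(kⱼ)` and `Q = ∏ Mⱼ^(2 - kⱼ)` this bounds `|A / PA|` by `q^(Σ kⱼ deg Mⱼ)`, and, since
`PQ = 0`, bounds `|PA|` by `|A / QA| ≤ q^(Σ (2 - kⱼ) deg Mⱼ)`. The product of the two bounds is
`q^(2n) = |A|`, so both are equalities (`card_cyclicCode`).

For the dual, conjugation is an involutive ring automorphism of `R`, so the Hermitian dual of `C`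
is the Euclidean dual of the conjugate code, an `R`-submodule of the same size. The `u`-coefficient
of the Euclidean pairing is a nondegenerate `F_q`-bilinear form on `R^n`, and an `R`-submodule has
the same orthogonal for it as for the `R`-valued pairing, because the submodule is stable under
`u`. Counting dimensions gives `|C| |C^⊥| = q^(2n)` (`card_mul_card_hermitianDual`).
-/

open Polynomial TrivSqZeroExt

/-- Conjugation `(a + ub)‾ = a^(p^m) + u b^(p^m)` on `R = F_q + uF_q`. -/
noncomputable def dnConj {F : Type*} [CommRing F] (p m : ℕ) (z : DualNumber F) :
    DualNumber F :=
  TrivSqZeroExt.inl (z.fst ^ p ^ m) + TrivSqZeroExt.inr (z.snd ^ p ^ m)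

/-- The set of coefficient vectors of the cyclic code generated by `M₀` in
`R[x]/(x^n − 1)`, viewed inside `R^n` (membership is tested in `R[x]` modulo
`x^n − 1`). -/
def cyclicCode {R : Type*} [CommRing R] (n : ℕ) (M₀ : R[X]) :
    Set (Fin n → R) :=
  {v | (∑ i : Fin n, Polynomial.C (v i) * X ^ (i : ℕ)) ∈
    Ideal.span {M₀, X ^ n - 1}}

/-! ### Indices of principal ideals -/

/-- `CosetCover a s`: the ideal `aA` has at most `s` cosets in `A`, witnessed by a list of `s`
representatives (repetitions allowed). -/
def CosetCover {A : Type*} [CommRing A] (a : A) (s : ℕ) : Prop :=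
  ∃ f : Fin s → A, ∀ x, ∃ t y, x = f t + a * y

lemma CosetCover.one {A : Type*} [CommRing A] : CosetCover (1 : A) 1 :=
  ⟨fun _ => 0, fun x => ⟨0, x, by simp⟩⟩

/-- If `S` covers `A` modulo `aA` and `T` covers `A` modulo `bA`, then `S + aT` covers `A`
modulo `abA`. -/
lemma CosetCover.mul {A : Type*} [CommRing A] {a b : A} {s t : ℕ}
    (ha : CosetCover a s) (hb : CosetCover b t) : CosetCover (a * b) (s * t) := by
  obtain ⟨f, hf⟩ := ha
  obtain ⟨g, hg⟩ := hb
  refine ⟨fun z => f (finProdFinEquiv.symm z).1 + a * g (finProdFinEquiv.symm z).2, fun x => ?_⟩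
  obtain ⟨i, y, rfl⟩ := hf x
  obtain ⟨j, z, rfl⟩ := hg y
  refine ⟨finProdFinEquiv (i, j), z, ?_⟩
  simp only [Equiv.symm_apply_apply]
  ring

lemma CosetCover.pow {A : Type*} [CommRing A] {a : A} {s : ℕ} (ha : CosetCover a s) (k : ℕ) :
    CosetCover (a ^ k) (s ^ k) := by
  induction k with
  | zero => simpa using CosetCover.one
  | succ k ih => rw [pow_succ, pow_succ]; exact ih.mul ha

lemma CosetCover.prod {A : Type*} [CommRing A] {ι : Type*} (I : Finset ι) {a : ι → A} {s : ι → ℕ}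
    (h : ∀ i, CosetCover (a i) (s i)) : CosetCover (∏ i ∈ I, a i) (∏ i ∈ I, s i) := by
  classical
  induction I using Finset.induction_on with
  | empty => simpa using CosetCover.one
  | insert i I hi ih => rw [Finset.prod_insert hi, Finset.prod_insert hi]; exact (h i).mul ih

lemma CosetCover.card_le {A : Type*} [CommRing A] [Finite A] {a : A} {s : ℕ}
    (ha : CosetCover a s) : Nat.card A ≤ s * Nat.card (Set.range (a * ·)) := by
  obtain ⟨f, hf⟩ := ha
  have hs : Function.Surjective
      (fun z : Fin s × Set.range (a * ·) => f z.1 + (z.2 : A)) := fun x => by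
    obtain ⟨t, y, rfl⟩ := hf x
    exact ⟨(t, ⟨a * y, y, rfl⟩), rfl⟩
  simpa [Nat.card_prod] using Nat.card_le_card_of_surjective _ hs

/-- If `ab = 0`, then multiplication by `a` factors through `A / bA`, which bounds `|aA|`. -/
lemma CosetCover.card_range_le {A : Type*} [CommRing A] {a b : A} {s : ℕ}
    (hb : CosetCover b s) (hab : a * b = 0) : Nat.card (Set.range (a * ·)) ≤ s := by
  obtain ⟨f, hf⟩ := hb
  have hs : Function.Surjective
      (fun t : Fin s => (⟨a * f t, f t, rfl⟩ : Set.range (a * ·))) := by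
    rintro ⟨_, x, rfl⟩
    obtain ⟨t, y, rfl⟩ := hf x
    refine ⟨t, Subtype.ext ?_⟩
    simp only [mul_add, ← mul_assoc, hab, zero_mul, add_zero]
  simpa only [Nat.card_fin] using Nat.card_le_card_of_surjective _ hs

/-! ### Coefficient vectors and the quotient ring -/

/-- Division with remainder by a monic polynomial, with the remainder written as a coefficient
vector. -/
lemma exists_remainder_vector {R : Type*} [CommRing R] {g : R[X]} (hg : g.Monic) {d : ℕ}
    (hd : g.natDegree = d) (f : R[X]) :
    ∃ v : Fin d → R, ∃ h : R[X], f = (∑ i : Fin d, C (v i) * X ^ (i : ℕ)) + g * h := by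
  nontriviality R
  refine ⟨fun i => (f %ₘ g).coeff i, f /ₘ g, ?_⟩
  by_cases h1 : g = 1
  · subst h1
    simp at hd
    subst hd
    simp
  have hlt : (f %ₘ g).natDegree < d := hd ▸ natDegree_modByMonic_lt f hg h1
  rw [Fin.sum_univ_eq_sum_range (fun i => C ((f %ₘ g).coeff i) * X ^ i) d]
  rw [← as_sum_range_C_mul_X_pow' (f %ₘ g) hlt]
  exact (modByMonic_add_div f g).symm

lemma bijective_mk_vector {R : Type*} [CommRing R] [Nontrivial R] {g : R[X]} (hg : g.Monic) {d : ℕ}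
    (hd : g.natDegree = d) : Function.Bijective
      (fun v : Fin d → R => AdjoinRoot.mk g (∑ i : Fin d, C (v i) * X ^ (i : ℕ))) := by
  constructor
  · intro v w hvw
    have h := AdjoinRoot.mk_eq_mk.1 hvw
    rw [← Finset.sum_sub_distrib] at h
    simp only [← sub_mul, ← C_sub] at h
    have h0 : ∑ i : Fin d, C (v i - w i) * X ^ (i : ℕ) = 0 := by
      by_contra hne
      refine hg.not_dvd_of_degree_lt hne ?_ h
      rw [degree_eq_natDegree hg.ne_zero, hd]
      exact degree_sum_fin_lt _
    funext j
    have := congrArg (fun f => f.coeff (j : ℕ)) h0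
    simp only [finsetSum_coeff, coeff_C_mul, coeff_X_pow, coeff_zero] at this
    rw [Finset.sum_eq_single j] at this
    · simpa [sub_eq_zero] using this
    · intro i _ hij
      have : (j : ℕ) ≠ i := fun h => hij (Fin.ext h.symm)
      simp [this]
    · simp
  · intro y
    obtain ⟨f, rfl⟩ := AdjoinRoot.mk_surjective y
    obtain ⟨v, h, hv⟩ := exists_remainder_vector hg hd f
    refine ⟨v, ?_⟩
    conv_rhs => rw [hv]
    simp [AdjoinRoot.mk_self]

/-- Coefficient vectors of codewords correspond to the elements of the principal ideal generated
by `P` in `R[x]/(x^n - 1)`. -/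
lemma mem_cyclicCode_iff {R : Type*} [CommRing R] (n : ℕ) (P : R[X]) (v : Fin n → R) :
    v ∈ cyclicCode n P ↔
      AdjoinRoot.mk (X ^ n - 1 : R[X]) (∑ i : Fin n, C (v i) * X ^ (i : ℕ)) ∈
        Set.range (AdjoinRoot.mk (X ^ n - 1) P * ·) := by
  rw [cyclicCode, Set.mem_ofPred_eq, Ideal.mem_span_pair]
  constructor
  · rintro ⟨a, b, h⟩
    refine ⟨AdjoinRoot.mk _ a, ?_⟩
    rw [← h]
    simp only [map_add, map_mul, AdjoinRoot.mk_self]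
    ring
  · rintro ⟨y, hy⟩
    obtain ⟨a, rfl⟩ := AdjoinRoot.mk_surjective y
    simp only [← map_mul] at hy
    obtain ⟨b, hb⟩ := AdjoinRoot.mk_eq_mk.1 hy.symm
    exact ⟨a, b, by linear_combination -hb⟩

lemma monic_X_pow_sub_one {R : Type*} [CommRing R] {n : ℕ} (hn : 1 ≤ n) :
    (X ^ n - 1 : R[X]).Monic := by
  simpa using monic_X_pow_sub_C (1 : R) (by omega : n ≠ 0)

lemma natDegree_X_pow_sub_one {R : Type*} [CommRing R] [Nontrivial R] (n : ℕ) :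
    (X ^ n - 1 : R[X]).natDegree = n := by
  simpa using natDegree_X_pow_sub_C (n := n) (r := (1 : R))

lemma card_cyclicCode_eq {R : Type*} [CommRing R] [Nontrivial R] {n : ℕ} (hn : 1 ≤ n) (P : R[X]) :
    Nat.card (cyclicCode n P) = Nat.card (Set.range (AdjoinRoot.mk (X ^ n - 1) P * ·)) := by
  have hb := bijective_mk_vector (monic_X_pow_sub_one (R := R) hn) (natDegree_X_pow_sub_one n)
  exact Nat.card_congr
    ((Equiv.ofBijective _ hb).subtypeEquiv fun v => mem_cyclicCode_iff n P v)

/-! ### The size of the code -/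

lemma card_dualNumber (F : Type*) [Field F] [Fintype F] :
    Nat.card (DualNumber F) = Fintype.card F ^ 2 := by
  have : Nat.card (DualNumber F) = Nat.card (F × F) := rfl
  rw [this, Nat.card_prod, Nat.card_eq_fintype_card, sq]

instance finite_dualNumber (F : Type*) [Finite F] : Finite (DualNumber F) :=
  inferInstanceAs (Finite (F × F))

lemma vector_split {F : Type*} [Field F] {d : ℕ} (v : Fin d → DualNumber F) :
    ∑ i, C (v i) * X ^ (i : ℕ) = ∑ i, C (inl (v i).fst) * X ^ (i : ℕ) +
      C DualNumber.eps * ∑ i, C (inl (v i).snd) * X ^ (i : ℕ) := by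
  rw [Finset.mul_sum, ← Finset.sum_add_distrib]
  refine Finset.sum_congr rfl fun i _ => ?_
  rw [← mul_assoc, ← C_mul, ← add_mul, ← C_add]
  congr 2
  ext <;> simp

/-- If `u` lies in the ideal generated by the monic polynomial `g` in `R[x]/(h)`, then each
coset of that ideal contains a polynomial of degree `< deg g` with coefficients in `F`. -/
lemma cosetCover_of_dvd_eps {F : Type*} [Field F] [Fintype F] {h g : (DualNumber F)[X]}
    (hg : g.Monic) (hu : AdjoinRoot.mk h g ∣ AdjoinRoot.mk h (C DualNumber.eps)) :
    CosetCover (AdjoinRoot.mk h g) (Fintype.card F ^ g.natDegree) := by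
  obtain ⟨c, hc⟩ := hu
  obtain ⟨s, hs⟩ : ∃ s, s = Fintype.card F ^ g.natDegree := ⟨_, rfl⟩
  rw [← hs]
  obtain ⟨e⟩ : Nonempty ((Fin g.natDegree → F) ≃ Fin s) :=
    ⟨Fintype.equivFinOfCardEq (by simp [hs])⟩
  refine ⟨fun t => AdjoinRoot.mk h (∑ i, C (inl (e.symm t i)) * X ^ (i : ℕ)), fun x => ?_⟩
  obtain ⟨f, rfl⟩ := AdjoinRoot.mk_surjective x
  obtain ⟨v, w, rfl⟩ := exists_remainder_vector hg rfl f
  refine ⟨e fun i => (v i).fst,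
    AdjoinRoot.mk h w + c * AdjoinRoot.mk h (∑ i, C (inl (v i).snd) * X ^ (i : ℕ)), ?_⟩
  simp only [Equiv.symm_apply_apply]
  rw [vector_split v, map_add, map_add, map_mul _ (C DualNumber.eps), map_mul _ g, hc]
  ring

/-- The upper bounds on the index and on the size of the ideal multiply to the size of the whole
ring, so the bound on the size is attained. -/
theorem card_cyclicCode {F : Type*} [Field F] [Fintype F] {n r : ℕ} (hn : 1 ≤ n)
    (M : Fin r → (DualNumber F)[X]) (hmonic : ∀ j, (M j).Monic)
    (hfact : ∏ j, M j = X ^ n - C (1 + DualNumber.eps))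
    (k : Fin r → ℕ) (hk : ∀ j, k j ≤ 2) :
    Nat.card (cyclicCode n (∏ j, M j ^ k j)) =
      Fintype.card F ^ (∑ j, (2 - k j) * (M j).natDegree) := by
  set q := Fintype.card F with hq
  have hq0 : 0 < q := Fintype.card_pos
  have hsum : ∑ j, (M j).natDegree = n := by
    rw [← natDegree_prod_of_monic _ _ fun j _ => hmonic j, hfact, natDegree_X_pow_sub_C]
  set h : (DualNumber F)[X] := X ^ n - 1 with hh
  have hb := bijective_mk_vector (monic_X_pow_sub_one (R := DualNumber F) hn)
    (natDegree_X_pow_sub_one n)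
  have hfin : Finite (AdjoinRoot h) := Finite.of_surjective _ hb.2
  have hcardA : Nat.card (AdjoinRoot h) = q ^ (2 * n) := by
    rw [← Nat.card_congr (Equiv.ofBijective _ hb), Nat.card_fun, card_dualNumber, ← pow_mul,
      Nat.card_fin]
  -- modulo `x^n - 1` the product of all the `M j` is `-u`
  have hu : AdjoinRoot.mk h (∏ j, M j) = - AdjoinRoot.mk h (C DualNumber.eps) := by
    rw [hfact, ← map_neg]
    refine AdjoinRoot.mk_eq_mk.2 ⟨1, ?_⟩
    rw [hh, C_add, C_1]
    ring
  have hcov : ∀ j, CosetCover (AdjoinRoot.mk h (M j)) (q ^ (M j).natDegree) := fun j => by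
    refine cosetCover_of_dvd_eps (hmonic j) ?_
    rw [← dvd_neg, ← hu]
    exact map_dvd _ (Finset.dvd_prod_of_mem _ (Finset.mem_univ j))
  have hcovl : ∀ l : Fin r → ℕ,
      CosetCover (AdjoinRoot.mk h (∏ j, M j ^ l j)) (q ^ (∑ j, l j * (M j).natDegree)) := by
    intro l
    have := CosetCover.prod Finset.univ fun j => (hcov j).pow (l j)
    simp only [← pow_mul, Finset.prod_pow_eq_pow_sum] at this
    rw [map_prod]
    simp only [map_pow]
    simpa only [mul_comm] using this
  have hPQ : AdjoinRoot.mk h (∏ j, M j ^ k j) * AdjoinRoot.mk h (∏ j, M j ^ (2 - k j)) = 0 := by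
    rw [← map_mul, ← Finset.prod_mul_distrib]
    simp only [← pow_add, Nat.add_sub_cancel' (hk _)]
    rw [Finset.prod_pow, map_pow, hu, neg_sq, ← map_pow, ← C_pow, sq, DualNumber.eps_mul_eps]
    simp
  have h2n : ∑ j, k j * (M j).natDegree + ∑ j, (2 - k j) * (M j).natDegree = 2 * n := by
    rw [← Finset.sum_add_distrib, ← hsum, Finset.mul_sum]
    refine Finset.sum_congr rfl fun j _ => ?_
    rw [← add_mul, Nat.add_sub_cancel' (hk j)]
  rw [card_cyclicCode_eq hn]
  refine le_antisymm ((hcovl _).card_range_le hPQ) ?_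
  have := (hcovl k).card_le
  rw [hcardA, ← h2n, pow_add] at this
  exact Nat.le_of_mul_le_mul_left this (pow_pos hq0 _)

/-! ### Annihilators over the dual numbers -/

/-- The `F`-bilinear form `(x, y) ↦ u`-coefficient of `Σ xᵢ yᵢ` on `R^n`. The `u`-coefficient is a
generating functional of the Frobenius ring `R`, so this form sees the whole `R`-valued pairing. -/
noncomputable def sndForm (F : Type*) [Field F] (n : ℕ) :
    LinearMap.BilinForm F (Fin n → DualNumber F) :=
  LinearMap.mk₂ F (fun x y => (∑ i, x i * y i).snd)
    (fun x y z => by simp [add_mul, Finset.sum_add_distrib])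
    (fun c x y => by simp [← Finset.smul_sum])
    (fun x y z => by simp [mul_add, Finset.sum_add_distrib])
    (fun c x y => by simp [← Finset.smul_sum])

lemma sndForm_apply {F : Type*} [Field F] {n : ℕ} (x y : Fin n → DualNumber F) :
    sndForm F n x y = (∑ i, x i * y i).snd := rfl

lemma sndForm_isSymm (F : Type*) [Field F] (n : ℕ) : (sndForm F n).IsSymm := by
  refine ⟨fun x y => ?_⟩
  simp [sndForm_apply, mul_comm]

lemma sndForm_nondegenerate (F : Type*) [Field F] (n : ℕ) : (sndForm F n).Nondegenerate := by
  refine (LinearMap.IsRefl.nondegenerate_iff_separatingLeft (sndForm_isSymm F n).isRefl).2 ?_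
  intro x hx
  funext i
  have h1 := hx (Pi.single i 1)
  have h2 := hx (Pi.single i DualNumber.eps)
  simp [sndForm_apply, Pi.single_apply] at h1 h2
  ext <;> simp [h1, h2]

lemma eps_smul_pairing {F : Type*} [Field F] {n : ℕ} (x y : Fin n → DualNumber F) :
    sndForm F n x (fun i => DualNumber.eps * y i) = (∑ i, x i * y i).fst := by
  have : ∑ i, x i * (DualNumber.eps * y i) = DualNumber.eps * ∑ i, x i * y i := by
    rw [Finset.mul_sum]
    exact Finset.sum_congr rfl fun i _ => by ring
  rw [sndForm_apply, this]
  simp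

/-- Over `R = F + uF` a submodule and its annihilator for the standard pairing have complementary
sizes. -/
lemma card_mul_card_annihilator {F : Type*} [Field F] [Fintype F] {n : ℕ}
    (D : Submodule (DualNumber F) (Fin n → DualNumber F)) :
    Nat.card D * Nat.card {x : Fin n → DualNumber F | ∀ y ∈ D, ∑ i, x i * y i = 0} =
      Fintype.card F ^ (2 * n) := by
  set W := D.restrictScalars F with hW
  have hset : {x : Fin n → DualNumber F | ∀ y ∈ D, ∑ i, x i * y i = 0} =
      ((sndForm F n).orthogonal W : Set _) := by
    ext x
    simp only [Set.mem_ofPred_eq, SetLike.mem_coe, LinearMap.BilinForm.mem_orthogonal_iff]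
    constructor
    · intro h y hy
      rw [(sndForm_isSymm F n).eq y x]
      simp [sndForm_apply, h y hy]
    · intro h y hy
      have h1 := h y hy
      have h2 := h (fun i => DualNumber.eps * y i) (D.smul_mem DualNumber.eps hy)
      rw [(sndForm_isSymm F n).eq _ x] at h1 h2
      rw [eps_smul_pairing] at h2
      exact TrivSqZeroExt.ext h2 h1
  have hV : Nat.card F ^ Module.finrank F (Fin n → DualNumber F) = Fintype.card F ^ (2 * n) := by
    rw [← Module.natCard_eq_pow_finrank, Nat.card_fun, card_dualNumber, ← pow_mul]
    simp
  have hfr := LinearMap.BilinForm.finrank_orthogonal (sndForm_nondegenerate F n) W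
  have hle := Submodule.finrank_le W
  have h1 : Nat.card D = Nat.card W := rfl
  have h2 : Nat.card {x : Fin n → DualNumber F | ∀ y ∈ D, ∑ i, x i * y i = 0} =
    Nat.card ((sndForm F n).orthogonal W) := by rw [hset]; rfl
  rw [h1, h2, Module.natCard_eq_pow_finrank (K := F) (V := W),
    Module.natCard_eq_pow_finrank (K := F) (V := (sndForm F n).orthogonal W), hfr, ← pow_add, Nat.add_sub_cancel' hle, hV]

/-! ### Conjugation and the Hermitian dual -/

section Conj

variable {F : Type*} [Field F] {p m : ℕ}

lemma dnConj_add [Fact p.Prime] [CharP F p] (a b : DualNumber F) :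
    dnConj p m (a + b) = dnConj p m a + dnConj p m b := by
  ext <;> simp [dnConj, add_pow_char_pow]

lemma dnConj_mul [Fact p.Prime] [CharP F p] (a b : DualNumber F) :
    dnConj p m (a * b) = dnConj p m a * dnConj p m b := by
  ext <;> simp [dnConj, add_pow_char_pow, mul_pow]

lemma dnConj_dnConj [Fintype F] (hF : Fintype.card F = p ^ (2 * m)) (a : DualNumber F) :
    dnConj p m (dnConj p m a) = a := by
  have h (x : F) : (x ^ p ^ m) ^ p ^ m = x := by
    rw [← pow_mul, ← pow_add, ← two_mul, ← hF, FiniteField.pow_card]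
  ext <;> simp [dnConj, h]

end Conj

lemma mem_cyclicCode_add {R : Type*} [CommRing R] {n : ℕ} {P : R[X]} {v w : Fin n → R}
    (hv : v ∈ cyclicCode n P) (hw : w ∈ cyclicCode n P) :
    (fun i => v i + w i) ∈ cyclicCode n P := by
  have := Ideal.add_mem (Ideal.span {P, X ^ n - 1}) hv hw
  rw [← Finset.sum_add_distrib] at this
  simpa only [cyclicCode, Set.mem_ofPred_eq, C_add, add_mul] using this

lemma mem_cyclicCode_smul {R : Type*} [CommRing R] {n : ℕ} {P : R[X]} (a : R) {v : Fin n → R}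
    (hv : v ∈ cyclicCode n P) : (fun i => a * v i) ∈ cyclicCode n P := by
  have := Ideal.mul_mem_left (Ideal.span {P, X ^ n - 1}) (C a) hv
  rw [Finset.mul_sum] at this
  simpa only [cyclicCode, Set.mem_ofPred_eq, C_mul, mul_assoc] using this

lemma mem_cyclicCode_zero {R : Type*} [CommRing R] {n : ℕ} {P : R[X]} :
    (fun _ => 0) ∈ cyclicCode (R := R) n P := by
  simp [cyclicCode]

/-- The image of a cyclic code under coordinatewise conjugation, written as a preimage because
conjugation is an involution. -/
noncomputable def conjCode {F : Type*} [Field F] (p m n : ℕ) [Fact p.Prime] [CharP F p]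
    (P : (DualNumber F)[X]) : Submodule (DualNumber F) (Fin n → DualNumber F) where
  carrier := {y | (fun i => dnConj p m (y i)) ∈ cyclicCode n P}
  add_mem' {x y} hx hy := by
    simpa only [Set.mem_ofPred_eq, Pi.add_apply, dnConj_add] using mem_cyclicCode_add hx hy
  zero_mem' := by
    have h0 : dnConj p m (0 : DualNumber F) = 0 := by
      have := dnConj_add (p := p) (m := m) (0 : DualNumber F) 0
      simpa using this
    simpa only [Set.mem_ofPred_eq, Pi.zero_apply, h0] using mem_cyclicCode_zero
  smul_mem' a y hy := by
    simpa only [Set.mem_ofPred_eq, Pi.smul_apply, smul_eq_mul, dnConj_mul]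
      using mem_cyclicCode_smul (dnConj p m a) hy

/-- The Hermitian dual is the annihilator of the conjugate code, which has as many words as the
code itself. -/
lemma card_mul_card_hermitianDual {F : Type*} [Field F] [Fintype F] {p m n : ℕ} [Fact p.Prime]
    [CharP F p] (hF : Fintype.card F = p ^ (2 * m)) (P : (DualNumber F)[X]) :
    Nat.card (cyclicCode n P) * Nat.card {x : Fin n → DualNumber F |
        ∀ c ∈ cyclicCode n P, ∑ i, x i * dnConj p m (c i) = 0} = (p ^ (2 * m)) ^ (2 * n) := by
  rw [← hF, ← card_mul_card_annihilator (conjCode p m n P)]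
  have hinv : Function.Involutive
      (fun (y : Fin n → DualNumber F) i => dnConj p m (y i)) := fun y => by
    funext i
    exact dnConj_dnConj hF (y i)
  have h1 : Nat.card (cyclicCode n P) = Nat.card (conjCode p m n P) := by
    refine Nat.card_congr (Equiv.subtypeEquiv (p := fun v => v ∈ cyclicCode n P)
      (q := fun v => v ∈ conjCode p m n P) hinv.toPerm fun v => ?_)
    change v ∈ cyclicCode n P ↔ (fun i => dnConj p m (dnConj p m (v i))) ∈ cyclicCode n P
    simp only [dnConj_dnConj hF]
  have h2 : {x : Fin n → DualNumber F | ∀ c ∈ cyclicCode n P, ∑ i, x i * dnConj p m (c i) = 0} =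
      {x | ∀ y ∈ conjCode p m n P, ∑ i, x i * y i = 0} := by
    ext x
    rw [Set.mem_ofPred_eq, Set.mem_ofPred_eq]
    constructor
    · intro h y hy
      have := h _ hy
      simpa only [dnConj_dnConj hF] using this
    · intro h c hc
      refine h (fun i => dnConj p m (c i)) ?_
      change (fun i => dnConj p m (dnConj p m (c i))) ∈ cyclicCode n P
      simpa only [dnConj_dnConj hF] using hc
  rw [h1, h2]

/-- Let `C = ⟨∏ⱼ Mⱼ^{kⱼ}⟩` be a cyclic code of length `n` over
`R = F_q + uF_q`, where `x^n − (1+u) = ∏ⱼ Mⱼ` is a factorization into pairwise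
coprime monic basic irreducible polynomials and `0 ≤ kⱼ ≤ 2`. Then
`|C| = q^{Σⱼ (2−kⱼ)·deg Mⱼ}`, `|C^{⊥_H}| = q^{Σⱼ kⱼ·deg Mⱼ}`, and hence
`|C|·|C^{⊥_H}| = q^{2n}`. -/
theorem stmt19 (p m n r : ℕ) [Fact p.Prime] (hm : 1 ≤ m) (hn : 1 ≤ n)
    (hcop : Nat.Coprime n p)
    (F : Type*) [Field F] [Fintype F] (hF : Fintype.card F = p ^ (2 * m))
    (M : Fin r → (DualNumber F)[X])
    (hmonic : ∀ j, (M j).Monic)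
    (hbasic : ∀ j, Irreducible ((M j).map (TrivSqZeroExt.fstHom F F F).toRingHom))
    (hpairwise : ∀ j j', j ≠ j' → IsCoprime (M j) (M j'))
    (hfact : ∏ j, M j = X ^ n - Polynomial.C (1 + DualNumber.eps))
    (k : Fin r → ℕ) (hk : ∀ j, k j ≤ 2) :
    Nat.card (cyclicCode n (∏ j, M j ^ k j)) =
        (p ^ (2 * m)) ^ (∑ j, (2 - k j) * (M j).natDegree) ∧
    Nat.card {x : Fin n → DualNumber F |
        ∀ c ∈ cyclicCode n (∏ j, M j ^ k j), ∑ i, x i * dnConj p m (c i) = 0} =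
        (p ^ (2 * m)) ^ (∑ j, k j * (M j).natDegree) ∧
    Nat.card (cyclicCode n (∏ j, M j ^ k j)) *
        Nat.card {x : Fin n → DualNumber F |
          ∀ c ∈ cyclicCode n (∏ j, M j ^ k j), ∑ i, x i * dnConj p m (c i) = 0} =
        (p ^ (2 * m)) ^ (2 * n) := by
  have hchar : CharP F p := charP_of_card_eq_prime_pow hF
  have hq0 : 0 < p ^ (2 * m) := hF ▸ Fintype.card_pos
  have hC := card_cyclicCode hn M hmonic hfact k hk
  rw [hF] at hC
  have hdual := card_mul_card_hermitianDual (n := n) hF (∏ j, M j ^ k j)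
  refine ⟨hC, ?_, hdual⟩
  have h2n : ∑ j, (2 - k j) * (M j).natDegree + ∑ j, k j * (M j).natDegree = 2 * n := by
    have hsum : ∑ j, (M j).natDegree = n := by
      rw [← natDegree_prod_of_monic _ _ fun j _ => hmonic j, hfact, natDegree_X_pow_sub_C]
    rw [← Finset.sum_add_distrib, ← hsum, Finset.mul_sum]
    refine Finset.sum_congr rfl fun j _ => ?_
    rw [← add_mul, Nat.sub_add_cancel (hk j)]
  rw [hC, ← h2n, pow_add] at hdual
  exact Nat.eq_of_mul_eq_mul_left (pow_pos hq0 _) hdual
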